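/- Chordal graphs have singularity degree at most one: if G is chordal, then for every c ∈ ℰ(G) the PSD matrix completion problem P(G,c) admits a dual certificate Ω ⪰ 0 with ⟨Ω, X⟩ = 0 for all feasible X and rank(Ω) = n − r, where r is the maximum rank among feasible solutions. -/

import Mathlib

open Matrix

/-- `X` is a feasible solution of the PSD matrix completion problem `P(G, c)`. -/
def Feasible {n : ℕ} (G : SimpleGraph (Fin n)) (c : Fin n → Fin n → ℝ)
    (X : Matrix (Fin n) (Fin n) ℝ) : Prop :=
  X.PosSemidef ∧ (∀ i, X i i = 1) ∧ ∀ i j, G.Adj i j → X i j = c i j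

/-- The maximum rank of a feasible solution of `P(G, c)`. -/
noncomputable def maxRank {n : ℕ} (G : SimpleGraph (Fin n)) (c : Fin n → Fin n → ℝ) : ℕ :=
  sSup {r | ∃ X, Feasible G c X ∧ X.rank = r}

/-- `Ω` is a facial reduction sequence for `P(G, c)`: symmetric stress matrices supported
on the diagonal and the edges of `G`, nested PSD, orthogonal (in the trace inner product)
to every feasible solution, and whose final zero set spans a subspace of dimension equal to
the maximum rank of a feasible solution (so the sequence has rank `n - maxRank G c`). -/
def IsFacialSeq {n : ℕ} (G : SimpleGraph (Fin n)) (c : Fin n → Fin n → ℝ)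
    {k : ℕ} (Ω : Fin k → Matrix (Fin n) (Fin n) ℝ) : Prop :=
  (∀ m, (Ω m).IsSymm) ∧
  (∀ m i j, i ≠ j → ¬ G.Adj i j → Ω m i j = 0) ∧
  (∀ m : Fin k, ∀ x : Fin n → ℝ,
    (∀ m' : Fin k, m' < m → x ⬝ᵥ (Ω m').mulVec x = 0) → 0 ≤ x ⬝ᵥ (Ω m).mulVec x) ∧
  (∀ X, Feasible G c X → ∀ m, (Ω m * X).trace = 0) ∧
  Module.finrank ℝ (Submodule.span ℝ {x : Fin n → ℝ | ∀ m, x ⬝ᵥ (Ω m).mulVec x = 0})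
    = maxRank G c

/-- The singularity degree of `P(G, c)`: the least length of a facial reduction sequence. -/
noncomputable def sd {n : ℕ} (G : SimpleGraph (Fin n)) (c : Fin n → Fin n → ℝ) : ℕ∞ :=
  sInf {s : ℕ∞ | ∃ (k : ℕ) (Ω : Fin k → Matrix (Fin n) (Fin n) ℝ),
    IsFacialSeq G c Ω ∧ s = k}

/-- The singularity degree of a graph `G`: the largest singularity degree of `P(G, c)`
over all feasible edge weights `c`. -/
noncomputable def sdGraph {n : ℕ} (G : SimpleGraph (Fin n)) : ℕ∞ :=
  sSup {s : ℕ∞ | ∃ c : Fin n → Fin n → ℝ, (∃ X, Feasible G c X) ∧ s = sd G c}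

/-- `G` is chordal: it has no induced cycle of length at least `4`. -/
def Chordal {n : ℕ} (G : SimpleGraph (Fin n)) : Prop :=
  ∀ m : ℕ, 4 ≤ m → ∀ f : Fin m ↪ Fin n,
    ¬ (∀ i j : Fin m, G.Adj (f i) (f j) ↔ (SimpleGraph.cycleGraph m).Adj i j)

/-!
A chordal graph has a simplicial vertex `v` (Dirac): for non-adjacent `a`, `b`, let `B` be the
component of `b` among the non-neighbours of `a`, and let `T` be its boundary. By chordality `T` is
a clique, and induction applied to `B ∪ T` gives a simplicial vertex outside `T`.

Deleting `v` exhibits `G` as a clique sum, and a pair `(X, Ω)` of a completion and a strictly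
complementary stress matrix passes through the sum. Write `[A, B; Bᴴ, D]` for the given matrix,
where the entries of `B` that `G` prescribes are the rows in a clique `K`. If `M` is supported on
`K` and solves `A M = B` there, then the congruence by the shear `[1, M; 0, 1]` of a pair for `A`
plus a pair for the Schur complement `D - Mᴴ A M` is a completion with a complementary partner, and
the partner is supported on `G` because `M` only touches `K`.

A matrix supported on `G` has the same inner product with all completions, so the partner of
one completion is orthogonal to all of them, which forces that completion to have maximal rank.
-/

section Graph

open SimpleGraph

variable {V W : Type*} {G : SimpleGraph V}

/-- Chordality over an arbitrary vertex type: no induced cycle of length at least `4`. -/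
def IsChordal (G : SimpleGraph V) : Prop :=
  ∀ m, 4 ≤ m → ¬ cycleGraph m ⊴ G

theorem IsChordal.of_isIndContained {H : SimpleGraph W} (hG : IsChordal G) (hH : H ⊴ G) :
    IsChordal H :=
  fun m hm hc ↦ hG m hm (hc.trans hH)

theorem dist_getVert_of_length_eq_dist {x y : V} {p : G.Walk x y} (hp : p.length = G.dist x y)
    {i : ℕ} (hi : i ≤ p.length) : G.dist x (p.getVert i) = i := by
  simpa [Walk.take_length, hi] using (length_eq_dist_of_subwalk hp (p.isSubwalk_take i)).symm

theorem adj_getVert_iff_of_length_eq_dist {x y : V} {p : G.Walk x y}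
    (hp : p.length = G.dist x y) {i j : ℕ} (hi : i ≤ p.length) (hj : j ≤ p.length) :
    G.Adj (p.getVert i) (p.getVert j) ↔ i + 1 = j ∨ j + 1 = i := by
  constructor
  · intro h
    have hdist := h.diff_dist_adj (u := x)
    have hne : i ≠ j := by rintro rfl; exact h.ne rfl
    rw [dist_getVert_of_length_eq_dist hp hi, dist_getVert_of_length_eq_dist hp hj] at hdist
    lia
  · rintro (rfl | rfl)
    · exact p.adj_getVert_succ hj
    · exact (p.adj_getVert_succ hi).symm

/-- A geodesic, viewed as an induced path. -/
def geodesicEmbedding {x y : V} (p : G.Walk x y) (hp : p.length = G.dist x y) :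
    pathGraph (p.length + 1) ↪g G where
  toFun i := p.getVert i
  inj' i j h := by
    have hdist := congrArg (G.dist x) h
    rwa [dist_getVert_of_length_eq_dist hp i.is_le, dist_getVert_of_length_eq_dist hp j.is_le,
      Fin.val_inj] at hdist
  map_rel_iff' {i j} := by
    rw [pathGraph_adj]
    exact adj_getVert_iff_of_length_eq_dist hp i.is_le j.is_le

theorem cycleGraph_adj_iff_val {n : ℕ} {i j : Fin n} :
    (cycleGraph n).Adj i j ↔ i.val + 1 = j ∨ j.val + 1 = i ∨
      (n ≠ 1 ∧ i.val = 0 ∧ j.val + 1 = n) ∨ (n ≠ 1 ∧ j.val = 0 ∧ i.val + 1 = n) := by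
  have := i.2
  have := j.2
  rw [cycleGraph_adj']
  rcases le_total i j with h | h
  · grind [Fin.sub_val_of_le, Fin.coe_sub_iff_lt]
  · grind [Fin.sub_val_of_le, Fin.coe_sub_iff_lt]

theorem cycleGraph_isIndContained_of_cone {k : ℕ} (f : pathGraph (k + 1) ↪g G) {a : V}
    (ha : ∀ i, f i ≠ a) (hadj : ∀ i, G.Adj a (f i) ↔ i = 0 ∨ i = Fin.last k) :
    cycleGraph (k + 2) ⊴ G := by
  refine ⟨⟨⟨Fin.snoc f a, Fin.snoc_injective_iff.2 ⟨f.injective, by simpa using ha⟩⟩, ?_⟩⟩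
  intro i j
  rw [cycleGraph_adj_iff_val]
  induction i using Fin.lastCases with
  | last =>
    induction j using Fin.lastCases with
    | last => simp
    | cast j =>
      have hij : G.Adj a (f j) ↔ _ := hadj j
      simp only [Function.Embedding.coeFn_mk, Fin.snoc_last, Fin.snoc_castSucc, hij, Fin.ext_iff,
        Fin.val_last, Fin.val_castSucc, Fin.val_zero]
      lia
  | cast i =>
    induction j using Fin.lastCases with
    | last =>
      have hij : G.Adj (f i) a ↔ _ := (G.adj_comm _ _).trans (hadj i)
      simp only [Function.Embedding.coeFn_mk, Fin.snoc_last, Fin.snoc_castSucc, hij, Fin.ext_iff,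
        Fin.val_last, Fin.val_castSucc, Fin.val_zero]
      lia
    | cast j => simp [f.map_adj_iff, pathGraph_adj]; lia

theorem IsChordal.adj_of_preconnected (hG : IsChordal G) {B : Set V}
    (hB : (G.induce B).Preconnected) {a x y : V} (haB : ∀ z ∈ B, z ≠ a ∧ ¬ G.Adj a z)
    (hax : G.Adj a x) (hay : G.Adj a y) (hxB : ∃ z ∈ B, G.Adj x z) (hyB : ∃ z ∈ B, G.Adj y z)
    (hxy : x ≠ y) : G.Adj x y := by
  obtain ⟨z, hz, hxz⟩ := hxB
  obtain ⟨z', hz', hyz'⟩ := hyB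
  have hconn : (G.induce ({y} ∪ ({x} ∪ B))).Connected :=
    connected_induce_union .of_subsingleton
      (connected_induce_union .of_subsingleton hB (Set.mem_singleton x) hz hxz).preconnected
      (Set.mem_singleton y) (.inr hz') hyz'
  obtain ⟨p, hp⟩ := hconn.exists_walk_length_eq_dist ⟨x, .inr (.inl rfl)⟩ ⟨y, .inl rfl⟩
  let f := (Embedding.induce _).comp (geodesicEmbedding p hp)
  have hf_zero : f 0 = x := congrArg Subtype.val p.getVert_zero
  have hf_last : f (Fin.last _) = y := congrArg Subtype.val p.getVert_length
  have hf_mem (i) : f i = y ∨ f i = x ∨ f i ∈ B := (p.getVert i).2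
  have hcycle : cycleGraph (p.length + 2) ⊴ G := by
    refine cycleGraph_isIndContained_of_cone f (a := a) (fun i ↦ ?_) fun i ↦ ⟨fun h ↦ ?_, ?_⟩
    · rcases hf_mem i with h | h | h
      · rw [h]; exact hay.ne'
      · rw [h]; exact hax.ne'
      · exact (haB _ h).1
    · rcases hf_mem i with h' | h' | h'
      · exact .inr (f.injective (h'.trans hf_last.symm))
      · exact .inl (f.injective (h'.trans hf_zero.symm))
      · exact absurd h (haB _ h').2
    · rintro (rfl | rfl)
      · rwa [hf_zero]
      · rwa [hf_last]
  have hlength : p.length < 2 := by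
    by_contra! h
    exact hG _ (by lia) hcycle
  have hlength_ne : p.length ≠ 0 := fun h ↦
    hxy (hf_zero.symm.trans ((congrArg f (Fin.ext h.symm)).trans hf_last))
  have hadj : G.Adj (f 0) (f (Fin.last _)) := by
    rw [f.map_adj_iff, pathGraph_adj, Fin.val_zero, Fin.val_last]
    lia
  rwa [hf_zero, hf_last] at hadj

/-- A vertex is simplicial if its neighbours are pairwise adjacent. -/
def IsSimplicial (G : SimpleGraph V) (v : V) : Prop :=
  G.IsClique (G.neighborSet v)

theorem IsSimplicial.of_induce {U : Set V} {v : U} (hv : IsSimplicial (G.induce U) v)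
    (hU : G.neighborSet v ⊆ U) : IsSimplicial G v :=
  fun x hx y hy hxy ↦ hv (x := ⟨x, hU hx⟩) hx (y := ⟨y, hU hy⟩) hy (by simpa using hxy)

theorem exists_maximal_preconnected_induce [Finite V] {W : Set V} {b : V} (hb : b ∈ W) :
    ∃ B ⊆ W, b ∈ B ∧ (G.induce B).Preconnected ∧
      ∀ z ∈ B, ∀ u ∈ W, G.Adj z u → u ∈ B := by
  obtain ⟨B, -, ⟨hBW, hbB, hB⟩, hmax⟩ :=
    (Set.toFinite {B | B ⊆ W ∧ b ∈ B ∧ (G.induce B).Preconnected}).exists_le_maximal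
      (a := {b}) ⟨by simpa using hb, rfl, .of_subsingleton⟩
  refine ⟨B, hBW, hbB, hB, fun z hz u hu hzu ↦ ?_⟩
  have hBu : (G.induce (B ∪ {u})).Connected :=
    connected_induce_union hB .of_subsingleton hz rfl hzu
  exact hmax ⟨by grind, .inl hbB, hBu.preconnected⟩ Set.subset_union_left (.inr rfl)

theorem exists_not_adj_of_isClique {C : Set V} (hC : G.IsClique C) (hG : G ≠ ⊤) :
    ∃ a b, a ≠ b ∧ ¬ G.Adj a b ∧ ∀ c ∈ C, c ≠ a → G.Adj a c := by
  by_cases h : ∃ a ∈ C, ∃ b, a ≠ b ∧ ¬ G.Adj a b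
  · obtain ⟨a, ha, b, hab, hnadj⟩ := h
    exact ⟨a, b, hab, hnadj, fun c hc hca ↦ hC ha hc hca.symm⟩
  · push Not at h
    obtain ⟨a, b, hab, hnadj⟩ := ne_top_iff_exists_not_adj.1 hG
    exact ⟨a, b, hab, hnadj, fun c hc hca ↦ (h c hc a hca).symm⟩

theorem IsChordal.exists_isSimplicial_notMem [Finite V] (hG : IsChordal G) {C : Set V}
    (hC : G.IsClique C) (hCV : C ≠ Set.univ) : ∃ v ∉ C, IsSimplicial G v := by
  induction hn : Nat.card V using Nat.strong_induction_on generalizing V with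
  | h n ih =>
  by_cases hcomplete : G = ⊤
  · obtain ⟨v, hv⟩ := (Set.ne_univ_iff_exists_notMem C).1 hCV
    exact ⟨v, hv, fun x _ y _ hxy ↦ hcomplete ▸ hxy⟩
  obtain ⟨a, b, hab, hnadj, haC⟩ := exists_not_adj_of_isClique hC hcomplete
  obtain ⟨B, haB, hbB, hB, hBmax⟩ :=
    exists_maximal_preconnected_induce (G := G) (W := {z | z ≠ a ∧ ¬ G.Adj a z}) ⟨hab.symm, hnadj⟩
  let T : Set V := {t | G.Adj a t ∧ ∃ z ∈ B, G.Adj t z}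
  have hT : G.IsClique T := fun x hx y hy ↦
    hG.adj_of_preconnected hB haB hx.1 hy.1 hx.2 hy.2
  have hnbr {z} (hz : z ∈ B) : G.neighborSet z ⊆ B ∪ T := fun u (hzu : G.Adj z u) ↦ by
    by_cases hau : G.Adj a u
    · exact .inr ⟨hau, z, hz, hzu.symm⟩
    · have hua : u ≠ a := by rintro rfl; exact (haB hz).2 hzu.symm
      exact .inl (hBmax z hz u ⟨hua, hau⟩ hzu)
  have haU : a ∉ B ∪ T := by
    rintro (h | h)
    · exact (haB h).1 rfl
    · exact h.1.ne rfl
  have hcard : Nat.card ↥(B ∪ T) < n :=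
    hn ▸ Set.ncard_lt_card (Set.ne_univ_iff_exists_notMem _ |>.2 ⟨a, haU⟩)
  obtain ⟨⟨v, hvU⟩, hvT, hv⟩ := ih _ hcard (hG.of_isIndContained ⟨Embedding.induce (B ∪ T)⟩)
    (C := Subtype.val ⁻¹' T) (fun x hx y hy hxy ↦ hT hx hy (by simpa [Subtype.ext_iff] using hxy))
    (Set.ne_univ_iff_exists_notMem _ |>.2 ⟨⟨b, .inl hbB⟩, fun hb ↦ hnadj hb.1⟩) rfl
  have hvB : v ∈ B := hvU.resolve_right hvT
  exact ⟨v, fun hvC ↦ (haB hvB).2 (haC v hvC (haB hvB).1), hv.of_induce (hnbr hvB)⟩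

theorem IsChordal.exists_isSimplicial [Finite V] [Nonempty V] (hG : IsChordal G) :
    ∃ v, IsSimplicial G v := by
  obtain ⟨v, -, hv⟩ := hG.exists_isSimplicial_notMem (C := ∅) (by simp) Set.empty_ne_univ
  exact ⟨v, hv⟩

end Graph

section Matrix

open scoped ComplexOrder

variable {𝕜 m n p : Type*} [RCLike 𝕜]

section

open scoped MatrixOrder Matrix.Norms.L2Operator

theorem exists_eq_conjTranspose_mul_self [Fintype n] {A : Matrix n n 𝕜} (hA : A.PosSemidef) :
    ∃ F : Matrix n n 𝕜, A = Fᴴ * F := by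
  classical exact CStarAlgebra.nonneg_iff_eq_star_mul_self.1 hA.nonneg

end

theorem mul_eq_zero_of_trace_mul_eq_zero [Fintype n] {A B : Matrix n n 𝕜} (hA : A.PosSemidef)
    (hB : B.PosSemidef) (h : (A * B).trace = 0) : A * B = 0 := by
  obtain ⟨E, rfl⟩ := exists_eq_conjTranspose_mul_self hA
  obtain ⟨F, rfl⟩ := exists_eq_conjTranspose_mul_self hB
  have hEF : E * Fᴴ = 0 := by
    rw [← trace_conjTranspose_mul_self_eq_zero_iff, ← h, conjTranspose_mul,
      conjTranspose_conjTranspose, Matrix.mul_assoc, trace_mul_comm]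
    simp only [Matrix.mul_assoc]
  calc Eᴴ * E * (Fᴴ * F) = Eᴴ * (E * Fᴴ) * F := by simp only [Matrix.mul_assoc]
    _ = 0 := by rw [hEF, Matrix.mul_zero, Matrix.zero_mul]

theorem posSemidef_fromBlocks_zero_zero [Finite m] [Finite n] {A : Matrix m m 𝕜}
    {D : Matrix n n 𝕜} (hA : A.PosSemidef) (hD : D.PosSemidef) :
    (fromBlocks A 0 0 D).PosSemidef := by
  cases nonempty_fintype m
  cases nonempty_fintype n
  obtain ⟨E, rfl⟩ := exists_eq_conjTranspose_mul_self hA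
  obtain ⟨F, rfl⟩ := exists_eq_conjTranspose_mul_self hD
  simpa [fromBlocks_conjTranspose, fromBlocks_multiply] using
    posSemidef_conjTranspose_mul_self (fromBlocks E 0 0 F)

theorem rank_fromBlocks_zero_zero {K m' n' : Type*} [Field K] [Finite m] [Finite n] [Fintype m']
    [Fintype n'] (A : Matrix m m' K) (D : Matrix n n' K) :
    (fromBlocks A 0 0 D).rank = A.rank + D.rank := by
  have hprod : (fromBlocks A 0 0 D).mulVecLin =
      (LinearEquiv.sumArrowLequivProdArrow m n K K).symm.toLinearMap ∘ₗ
        A.mulVecLin.prodMap D.mulVecLin ∘ₗ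
          (LinearEquiv.sumArrowLequivProdArrow m' n' K K).toLinearMap := by
    refine LinearMap.ext fun x ↦ funext ?_
    rintro (i | i)
    all_goals
      simp only [mulVecLin_apply, fromBlocks_mulVec, zero_mulVec, add_zero, zero_add]
      rfl
  have hrange : LinearMap.range (A.mulVecLin.prodMap D.mulVecLin) =
      LinearMap.range ((LinearMap.range A.mulVecLin).subtype.prodMap
        (LinearMap.range D.mulVecLin).subtype) := by
    simp only [LinearMap.range_prodMap, Submodule.range_subtype]
  rw [Matrix.rank, hprod, LinearMap.range_comp, LinearEquiv.finrank_map_eq, LinearEquiv.range_comp,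
    hrange, LinearMap.finrank_range_of_inj (Subtype.val_injective.prodMap Subtype.val_injective),
    Module.finrank_prod]
  rfl

theorem exists_conjTranspose_mul_self_mul_eq [Fintype m] [Fintype n]
    (P : Matrix m n 𝕜) (Q : Matrix m p 𝕜) :
    ∃ M : Matrix n p 𝕜, Pᴴ * P * M = Pᴴ * Q := by
  have hrange : LinearMap.range (Pᴴ * P).mulVecLin = LinearMap.range Pᴴ.mulVecLin := by
    refine Submodule.eq_of_le_of_finrank_eq ?_ ?_
    · rw [mulVecLin_mul]
      exact LinearMap.range_comp_le_range _ _
    · exact (rank_conjTranspose_mul_self P).trans (rank_conjTranspose P).symm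
  have hcol (j : p) : ∃ x, (Pᴴ * P) *ᵥ x = (Pᴴ * Q).col j := by
    have hmem : Pᴴ *ᵥ Q.col j ∈ LinearMap.range (Pᴴ * P).mulVecLin :=
      hrange ▸ LinearMap.mem_range_self _ _
    exact hmem
  choose M hM using hcol
  exact ⟨(of M)ᵀ, ext_col fun j ↦ hM j⟩

theorem exists_schur_complement [Fintype m] [Finite n] {A : Matrix m m 𝕜} {B : Matrix m n 𝕜}
    {D : Matrix n n 𝕜} (h : (fromBlocks A B Bᴴ D).PosSemidef) :
    ∃ M : Matrix m n 𝕜, A * M = B ∧ (D - Mᴴ * A * M).PosSemidef := by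
  classical
  cases nonempty_fintype n
  obtain ⟨F, hF⟩ := exists_eq_conjTranspose_mul_self h
  obtain ⟨P, Q, rfl⟩ : ∃ P Q, F = fromCols P Q := ⟨_, _, (fromCols_toCols F).symm⟩
  rw [conjTranspose_fromCols_eq_fromRows_conjTranspose, fromRows_mul_fromCols, fromBlocks_inj] at hF
  obtain ⟨rfl, rfl, -, -⟩ := hF
  obtain ⟨M, hM⟩ := exists_conjTranspose_mul_self_mul_eq P Q
  refine ⟨M, hM, ?_⟩
  have hcongr := h.conjTranspose_mul_mul_same (fromRows (-M) 1)
  convert hcongr using 1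
  rw [conjTranspose_fromRows_eq_fromCols_conjTranspose, fromCols_mul_fromBlocks,
    fromCols_mul_fromRows]
  simp [← hM, Matrix.mul_assoc, neg_add_eq_sub]

theorem exists_schur_complement_on [Fintype m] [Finite n] {A : Matrix m m 𝕜} {B : Matrix m n 𝕜}
    {D : Matrix n n 𝕜} (h : (fromBlocks A B Bᴴ D).PosSemidef) (s : Set m) :
    ∃ M : Matrix m n 𝕜, (∀ i ∉ s, M i = 0) ∧ (∀ i ∈ s, (A * M) i = B i) ∧
      (D - Mᴴ * A * M).PosSemidef := by
  classical
  cases nonempty_fintype n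
  let J : Matrix m m 𝕜 := diagonal (s.indicator 1)
  have hJ : Jᴴ = J := by
    rw [diagonal_conjTranspose]
    congr 1
    ext i
    by_cases hi : i ∈ s <;> simp [hi]
  have hblocks : (fromBlocks (J * A * J) (J * B) (J * B)ᴴ D).PosSemidef := by
    have hcongr := h.conjTranspose_mul_mul_same (fromBlocks J 0 0 (1 : Matrix n n 𝕜))
    simpa only [fromBlocks_conjTranspose, fromBlocks_multiply, conjTranspose_mul, hJ,
      conjTranspose_zero, conjTranspose_one, Matrix.mul_zero, Matrix.zero_mul, Matrix.mul_one,
      Matrix.one_mul, add_zero, zero_add] using hcongr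
  obtain ⟨M, hM, hS⟩ := exists_schur_complement hblocks
  refine ⟨J * M, fun i hi ↦ funext fun j ↦ ?_, fun i hi ↦ funext fun j ↦ ?_, ?_⟩
  · simp [J, hi]
  · simpa [J, hi, Matrix.mul_assoc] using congrFun₂ hM i j
  · simpa only [conjTranspose_mul, hJ, Matrix.mul_assoc] using hS

/-- Strict complementarity of a pair of positive semidefinite matrices: they are orthogonal and
their ranks are as large as orthogonality allows. If `X` lies on a spectrahedron and `Ω` is
orthogonal to all of it, then `Ω` certifies that `X` has maximal rank there. -/
structure StrictlyComplementary [Fintype n] (X Ω : Matrix n n 𝕜) : Prop where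
  posSemidef_left : X.PosSemidef
  posSemidef_right : Ω.PosSemidef
  mul_eq_zero : X * Ω = 0
  rank_add_rank : X.rank + Ω.rank = Fintype.card n

namespace StrictlyComplementary

theorem conj [Fintype n] [DecidableEq n] {X Ω : Matrix n n 𝕜} (h : StrictlyComplementary X Ω)
    {P Q : Matrix n n 𝕜} (hPQ : P * Q = 1) : StrictlyComplementary (Pᴴ * X * P) (Q * Ω * Qᴴ) where
  posSemidef_left := h.posSemidef_left.conjTranspose_mul_mul_same P
  posSemidef_right := h.posSemidef_right.mul_mul_conjTranspose_same Q
  mul_eq_zero := calc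
    Pᴴ * X * P * (Q * Ω * Qᴴ) = Pᴴ * X * (P * Q) * Ω * Qᴴ := by simp only [Matrix.mul_assoc]
    _ = Pᴴ * (X * Ω) * Qᴴ := by rw [hPQ, Matrix.mul_one, Matrix.mul_assoc Pᴴ X Ω]
    _ = 0 := by rw [h.mul_eq_zero, Matrix.mul_zero, Matrix.zero_mul]
  rank_add_rank := by
    have hP : P.det ≠ 0 := det_ne_zero_of_right_inverse hPQ
    have hQ : Q.det ≠ 0 := det_ne_zero_of_left_inverse hPQ
    have hP' : Pᴴ.det ≠ 0 := by rwa [det_conjTranspose, star_ne_zero]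
    have hQ' : Qᴴ.det ≠ 0 := by rwa [det_conjTranspose, star_ne_zero]
    rw [rank_mul_eq_left_of_det_ne_zero P _ hP, rank_mul_eq_right_of_det_ne_zero Pᴴ _ hP',
      rank_mul_eq_left_of_det_ne_zero Qᴴ _ hQ', rank_mul_eq_right_of_det_ne_zero Q _ hQ,
      h.rank_add_rank]

theorem submatrix [Fintype m] [Fintype n] {X Ω : Matrix n n 𝕜} (h : StrictlyComplementary X Ω)
    (e : m ≃ n) : StrictlyComplementary (X.submatrix e e) (Ω.submatrix e e) where
  posSemidef_left := h.posSemidef_left.submatrix e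
  posSemidef_right := h.posSemidef_right.submatrix e
  mul_eq_zero := by rw [submatrix_mul_equiv, h.mul_eq_zero, submatrix_zero]; rfl
  rank_add_rank := by rw [rank_submatrix, rank_submatrix, h.rank_add_rank, Fintype.card_congr e]

theorem fromBlocks [Fintype m] [Fintype n] {X Ω : Matrix m m 𝕜} {S T : Matrix n n 𝕜}
    (h₁ : StrictlyComplementary X Ω) (h₂ : StrictlyComplementary S T) :
    StrictlyComplementary (fromBlocks X 0 0 S) (fromBlocks Ω 0 0 T) where
  posSemidef_left := posSemidef_fromBlocks_zero_zero h₁.posSemidef_left h₂.posSemidef_left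
  posSemidef_right := posSemidef_fromBlocks_zero_zero h₁.posSemidef_right h₂.posSemidef_right
  mul_eq_zero := by simp [fromBlocks_multiply, h₁.mul_eq_zero, h₂.mul_eq_zero]
  rank_add_rank := by
    rw [rank_fromBlocks_zero_zero, rank_fromBlocks_zero_zero, Fintype.card_sum,
      ← h₁.rank_add_rank, ← h₂.rank_add_rank]
    ring

theorem fromBlocks_shear [Fintype m] [Fintype n] {X Ω : Matrix m m 𝕜} {S T : Matrix n n 𝕜}
    (h₁ : StrictlyComplementary X Ω) (h₂ : StrictlyComplementary S T) (M : Matrix m n 𝕜) :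
    StrictlyComplementary (Matrix.fromBlocks X (X * M) (Mᴴ * X) (Mᴴ * X * M + S))
      (Matrix.fromBlocks (Ω + M * T * Mᴴ) (-(M * T)) (-(T * Mᴴ)) T) := by
  classical
  have hinv : (Matrix.fromBlocks 1 M 0 1 : Matrix (m ⊕ n) (m ⊕ n) 𝕜) *
      Matrix.fromBlocks 1 (-M) 0 1 = 1 := by
    simp [fromBlocks_multiply]
  simpa [fromBlocks_conjTranspose, fromBlocks_multiply] using (h₁.fromBlocks h₂).conj hinv

end StrictlyComplementary

theorem strictlyComplementary_diagonal [Fintype n] [DecidableEq n] {d : n → 𝕜} (hd : ∀ i, 0 ≤ d i) :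
    StrictlyComplementary (diagonal d) (diagonal ({i | d i = 0}.indicator 1)) where
  posSemidef_left := posSemidef_diagonal_iff.2 hd
  posSemidef_right := posSemidef_diagonal_iff.2 (Set.indicator_nonneg fun _ _ ↦ zero_le_one)
  mul_eq_zero := by
    rw [diagonal_mul_diagonal, ← diagonal_zero]
    congr 1
    ext i
    by_cases hi : d i = 0 <;> simp [hi]
  rank_add_rank := by
    classical
    rw [rank_diagonal, rank_diagonal, add_comm]
    simp only [ne_eq, Set.indicator_apply_eq_zero, Set.mem_ofPred_eq, Pi.one_apply, one_ne_zero,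
      imp_false, not_not, Fintype.card_subtype_compl]
    exact Nat.add_sub_cancel' (Fintype.card_subtype_le _)

theorem exists_strictlyComplementary [Fintype n] {X : Matrix n n 𝕜} (hX : X.PosSemidef) :
    ∃ Ω, StrictlyComplementary X Ω := by
  classical
  let U := hX.1.eigenvectorUnitary
  have hdiag := strictlyComplementary_diagonal (𝕜 := 𝕜) (d := RCLike.ofReal ∘ hX.1.eigenvalues)
    fun i ↦ RCLike.ofReal_nonneg.2 (hX.eigenvalues_nonneg i)
  have hconj := hdiag.conj (P := star (U : Matrix n n 𝕜)) (Q := U) (Unitary.coe_star_mul_self U)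
  rw [star_eq_conjTranspose, conjTranspose_conjTranspose] at hconj
  have hX' := hX.1.spectral_theorem
  rw [Unitary.conjStarAlgAut_apply] at hX'
  exact ⟨_, by rwa [← star_eq_conjTranspose, ← hX'] at hconj⟩

end Matrix

section Completion

open scoped ComplexOrder

variable {𝕜 V W U : Type*} [RCLike 𝕜] {G : SimpleGraph V}

/-- `X` is a positive semidefinite completion of the partial matrix with pattern `G` read off
from `Y`. -/
structure IsCompletion (G : SimpleGraph V) (Y X : Matrix V V 𝕜) : Prop where
  posSemidef : X.PosSemidef
  apply_self (i : V) : X i i = Y i i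
  apply_of_adj ⦃i j : V⦄ : G.Adj i j → X i j = Y i j

/-- The off-diagonal support of `Ω` lies in the edges of `G`. -/
def IsSupportedOn (G : SimpleGraph V) (Ω : Matrix V V 𝕜) : Prop :=
  ∀ i j, i ≠ j → ¬ G.Adj i j → Ω i j = 0

theorem IsCompletion.apply_eq_of_mem {Y X : Matrix V V 𝕜} (hX : IsCompletion G Y X) {C : Set V}
    (hC : G.IsClique C) {i j : V} (hi : i ∈ C) (hj : j ∈ C) : X i j = Y i j := by
  rcases eq_or_ne i j with rfl | hij
  · exact hX.apply_self i
  · exact hX.apply_of_adj (hC hi hj hij)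

theorem IsSupportedOn.trace_mul_eq [Fintype V] {Y X Z Ω : Matrix V V 𝕜} (hΩ : IsSupportedOn G Ω)
    (hX : IsCompletion G Y X) (hZ : IsCompletion G Y Z) : (Ω * X).trace = (Ω * Z).trace := by
  simp only [trace, diag_apply, mul_apply]
  refine Finset.sum_congr rfl fun i _ ↦ Finset.sum_congr rfl fun j _ ↦ ?_
  rcases eq_or_ne i j with rfl | hij
  · rw [hX.apply_self, hZ.apply_self]
  · by_cases hadj : G.Adj i j
    · rw [hX.apply_of_adj hadj.symm, hZ.apply_of_adj hadj.symm]
    · rw [hΩ i j hij hadj, zero_mul, zero_mul]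

theorem StrictlyComplementary.trace_mul_eq_zero [Fintype V] {Y X Z Ω : Matrix V V 𝕜}
    (h : StrictlyComplementary X Ω) (hΩ : IsSupportedOn G Ω) (hX : IsCompletion G Y X)
    (hZ : IsCompletion G Y Z) : (Ω * Z).trace = 0 := by
  rw [hΩ.trace_mul_eq hZ hX, trace_mul_comm, h.mul_eq_zero, trace_zero]

theorem StrictlyComplementary.isGreatest_rank [Fintype V] {Y X Ω : Matrix V V 𝕜}
    (h : StrictlyComplementary X Ω) (hΩ : IsSupportedOn G Ω) (hX : IsCompletion G Y X) :
    IsGreatest {r | ∃ Z, IsCompletion G Y Z ∧ Z.rank = r} X.rank := by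
  refine ⟨⟨X, hX, rfl⟩, ?_⟩
  rintro _ ⟨Z, hZ, rfl⟩
  have hle := rank_add_rank_le_card_of_mul_eq_zero <| mul_eq_zero_of_trace_mul_eq_zero
    h.posSemidef_right hZ.posSemidef (h.trace_mul_eq_zero hΩ hX hZ)
  have heq := h.rank_add_rank
  lia

/-- Every positive semidefinite matrix has a completion along `G` with a strictly complementary
partner supported on `G`. This is the form of singularity degree at most one that is stable
under gluing. -/
def HasComplementaryCompletions (𝕜 : Type*) [RCLike 𝕜] [Fintype V] (G : SimpleGraph V) : Prop :=
  ∀ Y : Matrix V V 𝕜, Y.PosSemidef →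
    ∃ X Ω, IsCompletion G Y X ∧ IsSupportedOn G Ω ∧ StrictlyComplementary X Ω

theorem hasComplementaryCompletions_top [Fintype V] :
    HasComplementaryCompletions 𝕜 (⊤ : SimpleGraph V) := fun Y hY ↦ by
  obtain ⟨Ω, hΩ⟩ := exists_strictlyComplementary hY
  exact ⟨Y, Ω, ⟨hY, fun _ ↦ rfl, fun _ _ _ ↦ rfl⟩, fun _ _ hij hadj ↦ absurd hij hadj, hΩ⟩

theorem HasComplementaryCompletions.of_comap_equiv [Fintype V] [Fintype W] (e : W ≃ V)
    (h : HasComplementaryCompletions 𝕜 (G.comap e)) : HasComplementaryCompletions 𝕜 G :=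
  fun Y hY ↦ by
  obtain ⟨X, Ω, hX, hΩ, hXΩ⟩ := h (Y.submatrix e e) (hY.submatrix e)
  refine ⟨X.submatrix e.symm e.symm, Ω.submatrix e.symm e.symm, ⟨hX.posSemidef.submatrix _,
    fun i ↦ ?_, fun i j hij ↦ ?_⟩, fun i j hij hadj ↦ ?_, hXΩ.submatrix e.symm⟩
  · simpa using hX.apply_self (e.symm i)
  · simpa using hX.apply_of_adj (i := e.symm i) (j := e.symm j) (by simpa using hij)
  · exact hΩ _ _ (by simpa using hij) (by simpa using hadj)

section Join

variable {G : SimpleGraph (W ⊕ U)} {K : Set W} {A X Ω : Matrix W W 𝕜} {B M : Matrix W U 𝕜}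
  {D S T : Matrix U U 𝕜}

theorem IsCompletion.fromBlocks_shear [Fintype W] (hX : IsCompletion (G.comap Sum.inl) A X)
    (hS : IsCompletion (G.comap Sum.inr) (D - Mᴴ * A * M) S)
    (hK : (G.comap Sum.inl).IsClique K)
    (hKU : ∀ w u, G.Adj (Sum.inl w) (Sum.inr u) → w ∈ K) (hM : ∀ w ∉ K, M w = 0)
    (hAM : ∀ w ∈ K, (A * M) w = B w)
    (hpsd : (fromBlocks X (X * M) (Mᴴ * X) (Mᴴ * X * M + S)).PosSemidef) :
    IsCompletion G (fromBlocks A B Bᴴ D)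
      (fromBlocks X (X * M) (Mᴴ * X) (Mᴴ * X * M + S)) := by
  have hXM {w} (hw : w ∈ K) : (X * M) w = (A * M) w := by
    ext u
    rw [mul_apply, mul_apply]
    refine Finset.sum_congr rfl fun w' _ ↦ ?_
    by_cases hw' : w' ∈ K
    · rw [hX.apply_eq_of_mem hK hw hw']
    · rw [hM w' hw', Pi.zero_apply, mul_zero, mul_zero]
  have hMXM : Mᴴ * X * M = Mᴴ * A * M := by
    ext u u'
    rw [Matrix.mul_assoc, Matrix.mul_assoc, mul_apply, mul_apply]
    refine Finset.sum_congr rfl fun w _ ↦ ?_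
    by_cases hw : w ∈ K
    · rw [hXM hw]
    · rw [conjTranspose_apply, hM w hw, Pi.zero_apply, star_zero, zero_mul, zero_mul]
  have hXB {w u} (hwu : G.Adj (Sum.inl w) (Sum.inr u)) : (X * M) w u = B w u :=
    congrFun ((hXM (hKU w u hwu)).trans (hAM w (hKU w u hwu))) u
  refine ⟨hpsd, ?_, ?_⟩
  · rintro (w | u)
    · exact hX.apply_self w
    · simp [hMXM, hS.apply_self]
  · rintro (w | u) (w' | u') hadj
    · exact hX.apply_of_adj hadj
    · exact hXB hadj
    · rw [← hpsd.1.apply]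
      exact congrArg star (hXB hadj.symm)
    · simp [hMXM, hS.apply_of_adj hadj]

theorem IsSupportedOn.fromBlocks_shear [Fintype U] (hΩ : IsSupportedOn (G.comap Sum.inl) Ω)
    (hT : IsSupportedOn (G.comap Sum.inr) T) (hK : (G.comap Sum.inl).IsClique K)
    (hKU : ∀ w u, w ∈ K → G.Adj (Sum.inl w) (Sum.inr u)) (hM : ∀ w ∉ K, M w = 0) :
    IsSupportedOn G (fromBlocks (Ω + M * T * Mᴴ) (-(M * T)) (-(T * Mᴴ)) T) := by
  have hMT {w} (hw : w ∉ K) : (M * T) w = 0 := by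
    rw [mul_apply_eq_vecMul, hM w hw, zero_vecMul]
  rintro (w | u) (w' | u') hne hadj
  · have hMTM : (M * T * Mᴴ) w w' = 0 := by
      by_cases hw : w ∈ K
      · have hw' : w' ∉ K := fun hw' ↦ hadj (hK hw hw' (by simpa using hne))
        simp [mul_apply, hM w' hw']
      · rw [mul_apply_eq_vecMul, hMT hw, zero_vecMul, Pi.zero_apply]
    rw [fromBlocks_apply₁₁, Matrix.add_apply, hMTM, add_zero]
    exact hΩ w w' (by simpa using hne) hadj
  · have hw : w ∉ K := fun hw ↦ hadj (hKU w u' hw)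
    simp [hMT hw]
  · have hw : w' ∉ K := fun hw ↦ hadj (hKU w' u hw).symm
    simp [mul_apply, hM w' hw]
  · exact hT u u' (by simpa using hne) hadj

theorem HasComplementaryCompletions.of_clique_join [Fintype W] [Fintype U]
    (h₁ : HasComplementaryCompletions 𝕜 (G.comap Sum.inl))
    (h₂ : HasComplementaryCompletions 𝕜 (G.comap Sum.inr))
    (hK : (G.comap Sum.inl).IsClique K)
    (hKU : ∀ w u, G.Adj (Sum.inl w) (Sum.inr u) ↔ w ∈ K) :
    HasComplementaryCompletions 𝕜 G := fun Y hY ↦ by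
  obtain ⟨A, B, D, rfl⟩ : ∃ A B D, Y = fromBlocks A B Bᴴ D := by
    refine ⟨Y.toBlocks₁₁, Y.toBlocks₁₂, Y.toBlocks₂₂, ?_⟩
    have hY21 : Y.toBlocks₁₂ᴴ = Y.toBlocks₂₁ := by
      ext u w
      exact hY.1.apply _ _
    rw [hY21, fromBlocks_toBlocks]
  obtain ⟨M, hM, hAM, hD⟩ := exists_schur_complement_on hY K
  obtain ⟨X, Ω, hX, hΩ, hXΩ⟩ := h₁ A (hY.submatrix Sum.inl)
  obtain ⟨S, T, hS, hT, hST⟩ := h₂ (D - Mᴴ * A * M) hD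
  have hshear := hXΩ.fromBlocks_shear hST M
  exact ⟨_, _,
    hX.fromBlocks_shear hS hK (fun w u ↦ (hKU w u).1) hM hAM hshear.posSemidef_left,
    hΩ.fromBlocks_shear hT hK (fun w u ↦ (hKU w u).2) hM, hshear⟩

end Join

theorem IsSimplicial.hasComplementaryCompletions [Fintype V] [DecidableEq V] {v : V}
    (hv : IsSimplicial G v)
    (h : HasComplementaryCompletions 𝕜 (G.comap (Subtype.val : {x // x ≠ v} → V))) :
    HasComplementaryCompletions 𝕜 G := by
  let e : {x // x ≠ v} ⊕ {x // x = v} ≃ V := (Equiv.sumComm _ _).trans (Equiv.sumCompl (· = v))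
  refine .of_comap_equiv e (.of_clique_join (K := Subtype.val ⁻¹' G.neighborSet v) h ?_ ?_ ?_)
  · rw [Subsingleton.elim ((G.comap e).comap Sum.inr) ⊤]
    exact hasComplementaryCompletions_top
  · exact fun x hx y hy hxy ↦ hv hx hy (Subtype.val_injective.ne hxy)
  · rintro x ⟨_, rfl⟩
    exact G.adj_comm _ _

theorem IsChordal.hasComplementaryCompletions [Fintype V] (hG : IsChordal G) :
    HasComplementaryCompletions 𝕜 G := by
  classical
  induction hn : Fintype.card V using Nat.strong_induction_on generalizing V with
  | h n ih =>
  cases isEmpty_or_nonempty V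
  · rw [Subsingleton.elim G ⊤]
    exact hasComplementaryCompletions_top
  · obtain ⟨v, hv⟩ := hG.exists_isSimplicial
    refine hv.hasComplementaryCompletions (ih _ ?_ ?_ rfl)
    · exact hn ▸ Fintype.card_subtype_lt (x := v) (by simp)
    · exact hG.of_isIndContained ⟨SimpleGraph.Embedding.comap (.subtype _) G⟩

theorem chordal_singularity_degree_le_one_general [Fintype V] (hG : IsChordal G)
    {Y : Matrix V V 𝕜} (hY : Y.PosSemidef) :
    ∃ Ω : Matrix V V 𝕜, Ω.PosSemidef ∧ IsSupportedOn G Ω ∧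
      (∀ X, IsCompletion G Y X → (Ω * X).trace = 0) ∧
      Ω.rank = Fintype.card V - sSup {r | ∃ X, IsCompletion G Y X ∧ X.rank = r} := by
  obtain ⟨X, Ω, hX, hΩ, hXΩ⟩ := hG.hasComplementaryCompletions Y hY
  refine ⟨Ω, hXΩ.posSemidef_right, hΩ, fun Z hZ ↦ hXΩ.trace_mul_eq_zero hΩ hX hZ, ?_⟩
  rw [(hXΩ.isGreatest_rank hΩ hX).csSup_eq, ← hXΩ.rank_add_rank, Nat.add_sub_cancel_left]

theorem Chordal.isChordal {n : ℕ} {G : SimpleGraph (Fin n)} (hG : Chordal G) : IsChordal G :=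
  fun m hm ⟨f⟩ ↦ hG m hm f.toEmbedding fun _ _ ↦ f.map_adj_iff

theorem Feasible.iff_isCompletion {n : ℕ} {G : SimpleGraph (Fin n)} {c : Fin n → Fin n → ℝ}
    {Y X : Matrix (Fin n) (Fin n) ℝ} (hY : Feasible G c Y) :
    Feasible G c X ↔ IsCompletion G Y X where
  mp hX := ⟨hX.1, fun i ↦ (hX.2.1 i).trans (hY.2.1 i).symm,
    fun i j hij ↦ (hX.2.2 i j hij).trans (hY.2.2 i j hij).symm⟩
  mpr hX := ⟨hX.posSemidef, fun i ↦ (hX.apply_self i).trans (hY.2.1 i),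
    fun i j hij ↦ (hX.apply_of_adj hij).trans (hY.2.2 i j hij)⟩

end Completion

theorem chordal_singularity_degree_le_one {n : ℕ} (G : SimpleGraph (Fin n))
    (hG : Chordal G) (c : Fin n → Fin n → ℝ) (hfeas : ∃ X, Feasible G c X) :
    ∃ Ω : Matrix (Fin n) (Fin n) ℝ, Ω.PosSemidef ∧
      (∀ i j, i ≠ j → ¬ G.Adj i j → Ω i j = 0) ∧
      (∀ X, Feasible G c X → (Ω * X).trace = 0) ∧
      Ω.rank = n - maxRank G c := by
  obtain ⟨Y, hY⟩ := hfeas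
  simpa only [maxRank, IsSupportedOn, hY.iff_isCompletion, Fintype.card_fin] using
    chordal_singularity_degree_le_one_general hG.isChordal hY.1
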